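/- Let P be a finite pure weighted graded poset of rank d possessing Property UL with constants (c^xyz_l, c^dia_l, c^sqr_l) and c^dia_l > 0. Then for all α, β ∈ ℝ, every 0 ≤ l ≤ d−1, and all f, g ∈ C^l: c^dia_l·⟨U_l f, U_l g⟩ = β(1−α)·⟨D_l f, D_l g⟩ + (α − c^sqr_l·(c^xyz_l − c^dia_l))·⟨f,g⟩ + Σ_{x∈P(l−1)} m(x)·⟨f_x, (M^+_{x,0} − α·Id)(Id − β·M^−_{x,0}) g_x⟩_x. -/

import Mathlib

open Finset

attribute [local instance] Classical.propDecidable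

noncomputable section

/-- A finite pure weighted graded poset of rank `d`, presented as a rank function
and a weight scheme on a finite partial order `P`. -/
structure WGP (P : Type) [Fintype P] [PartialOrder P] where
  /-- the rank of the poset -/
  d : ℤ
  /-- the rank function -/
  rk : P → ℤ
  rk_mono : Monotone rk
  rk_lb : ∀ x, -1 ≤ rk x
  rk_ub : ∀ x, rk x ≤ d
  rk_covBy : ∀ a b : P, a ⋖ b → rk b = rk a + 1
  bot_unique : ∃! x : P, rk x = -1
  isPure : ∀ x : P, ∃ y : P, rk y = d ∧ x ≤ y
  /-- the weight function -/
  m : P → ℝ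
  m_pos : ∀ x, 0 < m x
  /-- the transition probabilities: `p y x` is `p_{y → x}` -/
  p : P → P → ℝ
  p_nonneg : ∀ y x, 0 ≤ p y x
  p_pos_iff : ∀ y x, 0 < p y x ↔ x ⋖ y
  p_sum : ∀ y, 0 ≤ rk y → ∑ x ∈ univ.filter (fun x => x ⋖ y), p y x = 1
  m_eq : ∀ x, rk x < d → m x = ∑ y ∈ univ.filter (fun y => x ⋖ y), p y x * m y
  m_bot : ∀ x, rk x = -1 → m x = 1

/-- `T` has at most `n` eigenvalues greater than `c`, counted with
(geometric) multiplicity. -/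
def eigMultAboveLe {V : Type*} [AddCommGroup V] [Module ℝ V]
    (T : Module.End ℝ V) (c : ℝ) (n : ℕ) : Prop :=
  ∀ s : Finset ℝ, (∀ μ ∈ s, c < μ) →
    ∑ μ ∈ s, Module.finrank ℝ (T.eigenspace μ) ≤ n

/-- `μ` is the second largest eigenvalue of `T`, counted with multiplicity. -/
def IsSecondLargestEig {V : Type*} [AddCommGroup V] [Module ℝ V]
    (T : Module.End ℝ V) (μ : ℝ) : Prop :=
  T.HasEigenvalue μ ∧ eigMultAboveLe T μ 1 ∧
    ∃ s : Finset ℝ, (∀ ν ∈ s, μ ≤ ν) ∧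
      2 ≤ ∑ ν ∈ s, Module.finrank ℝ (T.eigenspace ν)

/-- `ν` is the least eigenvalue of `T`. -/
def IsLeastEig {V : Type*} [AddCommGroup V] [Module ℝ V]
    (T : Module.End ℝ V) (ν : ℝ) : Prop :=
  T.HasEigenvalue ν ∧ ∀ c : ℝ, T.HasEigenvalue c → ν ≤ c

/-- `λ(T) ≤ lam`, i.e. the second largest eigenvalue of `T` (with multiplicity)
is at most `lam` and the least eigenvalue is at least `-lam`. -/
def lamBd {V : Type*} [AddCommGroup V] [Module ℝ V]
    (T : Module.End ℝ V) (lam : ℝ) : Prop :=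
  eigMultAboveLe T lam 1 ∧ ∀ c : ℝ, T.HasEigenvalue c → -lam ≤ c

namespace WGP

variable {P : Type} [Fintype P] [PartialOrder P] (W : WGP P)

/-- The level set `P(i)`. -/
def lvl (i : ℤ) : Finset P := univ.filter (fun x => W.rk x = i)

/-- The weighted inner product on `C^i`. -/
def innerAt (i : ℤ) (f g : P → ℝ) : ℝ := ∑ x ∈ W.lvl i, W.m x * f x * g x

/-- The squared norm on `C^i`. -/
def normSqAt (i : ℤ) (f : P → ℝ) : ℝ := W.innerAt i f f

/-- The norm on `C^i`. -/
def normAt (i : ℤ) (f : P → ℝ) : ℝ := Real.sqrt (W.normSqAt i f)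

/-- The matrix of transition probabilities : entry `(y, x)` is `p_{y→x}`,
which vanishes unless `x ⋖ y`.  This is also the matrix of the up operator. -/
def upMat : Matrix P P ℝ := Matrix.of fun y x => W.p y x

/-- The matrix of the down operator. -/
def downMat : Matrix P P ℝ := Matrix.of fun x y => W.p y x * W.m y / W.m x

/-- The up operator `U`. -/
def Up (f : P → ℝ) : P → ℝ := W.upMat.mulVec f

/-- The down operator `D`. -/
def Down (f : P → ℝ) : P → ℝ := W.downMat.mulVec f

/-- `chSum x y = Σ_{c ∈ Ch(y→x)} p(c)`, the total `p`-weight of maximal chains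
from `x` up to `y` (the entry of the corresponding power of the transition
matrix). -/
def chSum (x y : P) : ℝ := (W.upMat ^ (W.rk y - W.rk x).toNat) y x

/-- The induced weight function of the link `P_x`. -/
def mL (x y : P) : ℝ := W.m y / W.m x * W.chSum x y

/-- The induced transition probabilities of the link `P_x` :
`pL x z y = (p_x)_{z → y}`. -/
def pL (x z y : P) : ℝ := W.p z y * W.chSum x y / W.chSum x z

/-- The level set `P_x(j)` of the link of `x`. -/
def linkLvl (x : P) (j : ℤ) : Finset P :=
  univ.filter (fun y => x ≤ y ∧ W.rk y = W.rk x + 1 + j)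

/-- The inner product of the link `P_x` at link-level `j`. -/
def innerL (x : P) (j : ℤ) (f g : P → ℝ) : ℝ :=
  ∑ y ∈ W.linkLvl x j, W.mL x y * f y * g y

/-- The matrix of the up operator of the link `P_x`. -/
def upMatL (x : P) : Matrix P P ℝ :=
  Matrix.of fun z y => if y ⋖ z ∧ x ≤ y then W.pL x z y else 0

/-- The matrix of the down operator of the link `P_x`. -/
def downMatL (x : P) : Matrix P P ℝ :=
  Matrix.of fun y z => if y ⋖ z then W.pL x z y * W.mL x z / W.mL x y else 0

/-- The up operator of the link `P_x`. -/
def UpL (x : P) (f : P → ℝ) : P → ℝ := (W.upMatL x).mulVec f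

/-- The down operator of the link `P_x`. -/
def DownL (x : P) (f : P → ℝ) : P → ℝ := (W.downMatL x).mulVec f

/-- The up-down walk `M^+_{x,0}` of the link `P_x`. -/
def MplusL (x : P) (f : P → ℝ) : P → ℝ := W.DownL x (W.UpL x f)

/-- The down-up walk `M^-_{x,0}` of the link `P_x`. -/
def MminusL (x : P) (f : P → ℝ) : P → ℝ := W.UpL x (W.DownL x f)

/-- The adjacency matrix. -/
def adjMat : Matrix P P ℝ := Matrix.of fun y x =>
  if x = y then 0 else
    ∑ z ∈ univ.filter (fun z => x ⋖ z ∧ y ⋖ z),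
      W.m z * W.p z x * W.p z y / ((1 - W.p z y) * W.m y)

/-- The adjacency operator. -/
def Adj (f : P → ℝ) : P → ℝ := W.adjMat.mulVec f

/-- The adjacency matrix of the link `P_x`. -/
def adjMatL (x : P) : Matrix P P ℝ := Matrix.of fun y w =>
  if w = y then 0 else
    ∑ z ∈ univ.filter (fun z => w ⋖ z ∧ y ⋖ z),
      W.mL x z * W.pL x z w * W.pL x z y / ((1 - W.pL x z y) * W.mL x y)

/-- The adjacency operator of the link `P_x`. -/
def AdjL (x : P) (f : P → ℝ) : P → ℝ := (W.adjMatL x).mulVec f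

/-- The up-down walk `M^+_l` as an endomorphism of `C^l`. -/
def MplusEnd (l : ℤ) : Module.End ℝ ({x : P // W.rk x = l} → ℝ) :=
  ((W.downMat * W.upMat).submatrix Subtype.val Subtype.val).mulVecLin

/-- The up-down walk `M^+_{x,0}` as an endomorphism of `C^0(P_x)`. -/
def MplusEndL (x : P) : Module.End ℝ ({y : P // x ⋖ y} → ℝ) :=
  ((W.downMatL x * W.upMatL x).submatrix Subtype.val Subtype.val).mulVecLin

/-- The adjacency operator `A_x` of the link `P_x` as an endomorphism of
`C^0(P_x)`. -/
def AdjEndL (x : P) : Module.End ℝ ({y : P // x ⋖ y} → ℝ) :=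
  ((W.adjMatL x).submatrix Subtype.val Subtype.val).mulVecLin

/-- A standard weight scheme. -/
def Standard : Prop :=
  ∀ y x : P, x ⋖ y → W.p y x = 1 / ((univ.filter (fun z => z ⋖ y)).card : ℝ)

/-- `P` is lower regular at level `i` with constant `N`. -/
def LowerRegAt (i : ℤ) (N : ℕ) : Prop :=
  ∀ y : P, W.rk y = i → (univ.filter (fun z => z ⋖ y)).card = N

/-- `P` is middle regular at level `i` with constant `N`. -/
def MiddleRegAt (i : ℤ) (N : ℕ) : Prop :=
  ∀ x z : P, W.rk x = i + 1 → W.rk z = i - 1 → z < x →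
    (univ.filter (fun y => z ⋖ y ∧ y ⋖ x)).card = N

/-- `P` is `∨∧`-regular at level `i` with constant `N`. -/
def WedgeRegAt (i : ℤ) (N : ℕ) : Prop :=
  ∀ y₁ y₂ : P, W.rk y₁ = i → W.rk y₂ = i → y₁ ≠ y₂ → (∃ z, y₁ ⋖ z ∧ y₂ ⋖ z) →
    (univ.filter (fun s => s ⋖ y₁ ∧ s ⋖ y₂)).card = N

/-- `P` is `⅄`-regular with constant `R`. -/
def WyeReg (R : ℕ) : Prop :=
  ∀ u y₁ y₂ : P, W.rk u = 2 → W.rk y₁ = 0 → W.rk y₂ = 0 → y₁ ≠ y₂ →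
    y₁ < u → y₂ < u →
    (univ.filter (fun z => y₁ ⋖ z ∧ y₂ ⋖ z ∧ z ⋖ u)).card = R

/-- Property UL.1 with constants `c`. -/
def UL1 (c : ℤ → ℝ) : Prop :=
  ∀ l : ℤ, 0 ≤ l → l < W.d → ∀ y : P, W.rk y = l → ∀ x : P, y ⋖ x →
    ∑ z ∈ univ.filter (fun z => z ⋖ y), W.p y z ^ 2 / W.chSum z x = c l

/-- Property UL.2 with constants `c`. -/
def UL2 (c : ℤ → ℝ) : Prop :=
  ∀ l : ℤ, 0 ≤ l → l < W.d → ∀ y₁ y₂ : P, W.rk y₁ = l → W.rk y₂ = l → y₁ ≠ y₂ →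
    ∀ x : P, y₁ ⋖ x → y₂ ⋖ x →
    ∑ z ∈ univ.filter (fun z => z ⋖ y₁ ∧ z ⋖ y₂),
      W.p y₁ z * W.p y₂ z / W.chSum z x = c l

/-- Property UL.3 with constants `c`. -/
def UL3 (c : ℤ → ℝ) : Prop :=
  ∀ l : ℤ, 0 ≤ l → l < W.d → ∀ y : P, W.rk y = l →
    ∑ x ∈ univ.filter (fun x => y ⋖ x), W.m x * W.p x y ^ 2 = c l * W.m y

/-- Property AL. -/
def AL : Prop :=
  ∀ l : ℤ, 0 ≤ l → l ≤ W.d - 1 → ∀ x y : P, W.rk x = l → W.rk y = l → x ≠ y →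
    ∑ z ∈ univ.filter (fun z => x ⋖ z ∧ y ⋖ z),
        W.m z * W.p z x * W.p z y / (1 - W.p z x)
    = ∑ z ∈ univ.filter (fun z => x ⋖ z ∧ y ⋖ z),
        W.m z * W.p z x * W.p z y *
          ∑ s ∈ univ.filter (fun s => s ⋖ x ∧ s ⋖ y),
            W.p x s * W.p y s / (W.chSum s z - W.p z x * W.p x s)

/-- Equation TL.1 with constant `c`. -/
def TL1 (c : ℝ) : Prop :=
  ∀ y : P, W.rk y = 0 →
    c * W.m y = ∑ z ∈ univ.filter (fun z => y ⋖ z), W.m z * W.p z y ^ 2 *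
      ∑ x ∈ univ.filter (fun x => x ⋖ z ∧ x ≠ y), W.p z x / (1 - W.p z x) ^ 2

/-- Equation TL.2 with constant `c`. -/
def TL2 (c : ℝ) : Prop :=
  ∀ y₁ y₂ : P, W.rk y₁ = 0 → W.rk y₂ = 0 → y₁ ≠ y₂ →
    c * ∑ z ∈ univ.filter (fun z => y₁ ⋖ z ∧ y₂ ⋖ z),
          W.m z * W.p z y₁ * W.p z y₂ / (1 - W.p z y₁)
    = ∑ z ∈ univ.filter (fun z => y₁ ⋖ z ∧ y₂ ⋖ z),
        W.m z * W.p z y₁ * W.p z y₂ *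
          ∑ x ∈ univ.filter (fun x => x ⋖ z ∧ x ≠ y₁ ∧ x ≠ y₂),
            W.p z x / (1 - W.p z x) ^ 2

/-- Equation TL.3 with constant `c`. -/
def TL3 (c : ℝ) : Prop :=
  ∀ y : P, W.rk y = 0 →
    c * W.m y =
      ∑ x ∈ univ.filter (fun x => W.rk x = 0 ∧ x ≠ y),
        ∑ z ∈ univ.filter (fun z => x ⋖ z ∧ y ⋖ z),
          ∑ w ∈ univ.filter (fun w => w ≠ z ∧ x ⋖ w ∧ y ⋖ w),
            ∑ u ∈ univ.filter (fun u => z ⋖ u ∧ w ⋖ u),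
              W.m u * W.p u z * W.p u w * W.p w y * W.p z y * W.p w x * W.p z x /
                (W.chSum x u * (1 - W.p u z * W.p z x / W.chSum x u) *
                  (1 - W.p w x) * (1 - W.p z x))

/-- Equation TL.4 with constant `c`. -/
def TL4 (c : ℝ) : Prop :=
  ∀ y₁ y₂ : P, W.rk y₁ = 0 → W.rk y₂ = 0 → y₁ ≠ y₂ →
    c * ∑ z ∈ univ.filter (fun z => y₁ ⋖ z ∧ y₂ ⋖ z),
          W.m z * W.p z y₁ * W.p z y₂ / (1 - W.p z y₁)
    = ∑ x ∈ univ.filter (fun x => W.rk x = 0 ∧ x ≠ y₁ ∧ x ≠ y₂),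
        ∑ z ∈ univ.filter (fun z => x ⋖ z ∧ y₂ ⋖ z),
          ∑ w ∈ univ.filter (fun w => w ≠ z ∧ x ⋖ w ∧ y₁ ⋖ w),
            ∑ u ∈ univ.filter (fun u => z ⋖ u ∧ w ⋖ u),
              W.m u * W.p u z * W.p u w * W.p w y₁ * W.p z y₂ * W.p w x * W.p z x /
                (W.chSum x u * (1 - W.p u z * W.p z x / W.chSum x u) *
                  (1 - W.p w x) * (1 - W.p z x))

/-- The induced function `f̂_x ∈ C^0(P_x)` of `f ∈ C^0`. -/
def hatF (x : P) (f : P → ℝ) : P → ℝ := fun z =>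
  (1 / (1 - W.p z x)) * ∑ y ∈ univ.filter (fun y => y ≠ x ∧ y ⋖ z), W.p z y * f y

/-- `P` is connected: the Markov chain `M^+_0` on `P(0)` is irreducible. -/
def Connected : Prop :=
  ∀ y z : P, W.rk y = 0 → W.rk z = 0 →
    ∃ j : ℕ, 0 < j ∧ ((W.downMat * W.upMat) ^ j) z y ≠ 0

/-- The link `P_x` is connected: the Markov chain `M^+_{x,0}` on `P_x(0)` is
irreducible. -/
def LinkConnected (x : P) : Prop :=
  ∀ y z : P, x ⋖ y → x ⋖ z →
    ∃ j : ℕ, 0 < j ∧ ((W.downMatL x * W.upMatL x) ^ j) z y ≠ 0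

/-- `c` is a nontrivial eigenvalue of the adjacency operator `A` of `P`,
i.e. one with an eigenvector orthogonal to the constants. -/
def IsNontrivEigAdj (c : ℝ) : Prop :=
  ∃ f : P → ℝ, (∃ y, W.rk y = 0 ∧ f y ≠ 0) ∧
    (∀ y, W.rk y = 0 → W.Adj f y = c * f y) ∧
    W.innerAt 0 f (fun _ => 1) = 0

/-- `c` is a nontrivial eigenvalue of the adjacency operator `A_x` of the
link `P_x`. -/
def IsNontrivEigAdjL (x : P) (c : ℝ) : Prop :=
  ∃ f : P → ℝ, (∃ y, x ⋖ y ∧ f y ≠ 0) ∧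
    (∀ y, x ⋖ y → W.AdjL x f y = c * f y) ∧
    W.innerL x 0 f (fun _ => 1) = 0

end WGP


namespace WGP

variable {P : Type} [Fintype P] [PartialOrder P] (W : WGP P)

lemma aux_p_zero {x y : P} (h : ¬ x ⋖ y) : W.p y x = 0 := by
  have h1 := W.p_nonneg y x
  have h2 := (W.p_pos_iff y x).not.mpr h
  linarith

lemma aux_strict {x y : P} (h : x < y) : W.rk x + 1 ≤ W.rk y := by
  obtain ⟨c, hc, hcy⟩ := exists_covBy_le_of_lt h
  have := W.rk_covBy _ _ hc
  have := W.rk_mono hcy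
  omega

lemma aux_cov {x y : P} : (x ≤ y ∧ W.rk y = W.rk x + 1) ↔ x ⋖ y := by
  constructor
  · rintro ⟨h, hr⟩
    have hlt : x < y := lt_of_le_of_ne h (by rintro rfl; omega)
    refine ⟨hlt, fun c h1 h2 => ?_⟩
    have := W.aux_strict h1
    have := W.aux_strict h2
    omega
  · intro h
    exact ⟨h.le, W.rk_covBy _ _ h⟩

lemma aux_ch0 (x : P) : W.chSum x x = 1 := by simp [chSum]

lemma aux_ch1 {x y : P} (h : x ⋖ y) : W.chSum x y = W.p y x := by
  have := W.rk_covBy _ _ h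
  simp [chSum, this, upMat]

lemma aux_ch2 {x y z : P} (h : x ⋖ y) (h' : y ⋖ z) :
    W.chSum x z = ∑ w, W.p z w * W.p w x := by
  have h1 := W.rk_covBy _ _ h
  have h2 := W.rk_covBy _ _ h'
  have : (W.rk z - W.rk x).toNat = 2 := by omega
  simp [chSum, this, upMat, pow_two, Matrix.mul_apply]

lemma aux_ch2_pos {x y z : P} (h : x ⋖ y) (h' : y ⋖ z) : 0 < W.chSum x z := by
  rw [W.aux_ch2 h h']
  apply Finset.sum_pos'
  · intro w _
    exact mul_nonneg (W.p_nonneg _ _) (W.p_nonneg _ _)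
  · exact ⟨y, mem_univ _, mul_pos ((W.p_pos_iff _ _).2 h') ((W.p_pos_iff _ _).2 h)⟩

lemma aux_down_L (x : P) (g : P → ℝ) : W.DownL x g x = W.Down g x := by
  unfold DownL Down Matrix.mulVec dotProduct
  apply Finset.sum_congr rfl
  intro z _
  have hx := (W.m_pos x).ne'
  by_cases h : x ⋖ z
  · have hp := ((W.p_pos_iff _ _).2 h).ne'
    simp only [downMatL, downMat, Matrix.of_apply, if_pos h, pL, mL, W.aux_ch0, W.aux_ch1 h]
    field_simp
  · simp [downMatL, downMat, h, W.aux_p_zero h]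

lemma aux_minus {x w : P} (h : x ⋖ w) (g : P → ℝ) : W.MminusL x g w = W.Down g x := by
  unfold MminusL UpL Matrix.mulVec dotProduct
  rw [Finset.sum_eq_single x]
  · have hp := ((W.p_pos_iff _ _).2 h).ne'
    simp [upMatL, h, pL, W.aux_ch0, W.aux_ch1 h, W.aux_down_L, hp]
  · intro v _ hv
    have : ¬ (v ⋖ w ∧ x ≤ v) := by
      rintro ⟨h1, h2⟩
      have := W.aux_strict (lt_of_le_of_ne h2 (Ne.symm hv))
      have := W.rk_covBy _ _ h1
      have := W.rk_covBy _ _ h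
      omega
    simp [upMatL, this]
  · simp

lemma aux_plus {x y : P} (h : x ⋖ y) (g : P → ℝ) :
    W.MplusL x g y = ∑ z, W.p z y * W.m z / W.m y *
      ∑ w, W.p z w * W.p w x / W.chSum x z * g w := by
  unfold MplusL DownL UpL Matrix.mulVec dotProduct
  apply Finset.sum_congr rfl
  intro z _
  by_cases hz : y ⋖ z
  · have hp := ((W.p_pos_iff _ _).2 h).ne'
    have hc := (W.aux_ch2_pos h hz).ne'
    have hx := (W.m_pos x).ne'
    have hy := (W.m_pos y).ne'
    congr 1
    · simp only [downMatL, Matrix.of_apply, if_pos hz, pL, mL, W.aux_ch1 h]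
      field_simp
    · apply Finset.sum_congr rfl
      intro w _
      congr 1
      by_cases hw : w ⋖ z
      · by_cases hxw : x ≤ w
        · have hxw' : x ⋖ w := by
            rw [← W.aux_cov]
            have := W.rk_covBy _ _ hw
            have := W.rk_covBy _ _ hz
            have := W.rk_covBy _ _ h
            exact ⟨hxw, by omega⟩
          simp [upMatL, hw, hxw, pL, W.aux_ch1 hxw']
        · have : ¬ x ⋖ w := fun h => hxw h.le
          simp [upMatL, hxw, W.aux_p_zero this]
      · simp [upMatL, hw, W.aux_p_zero hw]
  · simp [downMatL, hz, W.aux_p_zero hz]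

lemma aux_plus_shift {x y : P} (h : x ⋖ y) (hd : W.rk y < W.d) (g g' : P → ℝ) (c : ℝ)
    (hg : ∀ w, x ⋖ w → g' w = g w - c) :
    W.MplusL x g' y = W.MplusL x g y - c := by
  rw [W.aux_plus h, W.aux_plus h]
  have key : ∀ z, W.p z y * W.m z / W.m y * ∑ w, W.p z w * W.p w x / W.chSum x z * g' w
      = W.p z y * W.m z / W.m y * ∑ w, W.p z w * W.p w x / W.chSum x z * g w
        - (W.p z y * W.m z) * (c / W.m y) := by
    intro z
    by_cases hz : y ⋖ z
    · have hc := (W.aux_ch2_pos h hz).ne'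
      have : ∑ w, W.p z w * W.p w x / W.chSum x z * g' w
        = ∑ w, W.p z w * W.p w x / W.chSum x z * g w - c := by
        have e : ∀ w, W.p z w * W.p w x / W.chSum x z * g' w
          = W.p z w * W.p w x / W.chSum x z * g w
            - (W.p z w * W.p w x) * (c / W.chSum x z) := by
          intro w
          by_cases hw : x ⋖ w
          · rw [hg w hw]; ring
          · simp [W.aux_p_zero hw]
        rw [Finset.sum_congr rfl (fun w _ => e w), Finset.sum_sub_distrib, ← Finset.sum_mul,
          ← W.aux_ch2 h hz]
        field_simp
      rw [this]; ring
    · simp [W.aux_p_zero hz]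
  rw [Finset.sum_congr rfl (fun z _ => key z), Finset.sum_sub_distrib, ← Finset.sum_mul]
  have hm : ∑ z, W.p z y * W.m z = W.m y := by
    rw [W.m_eq y hd, Finset.sum_filter]
    apply Finset.sum_congr rfl
    intro z _
    split_ifs with hz
    · rfl
    · simp [W.aux_p_zero hz]
  rw [hm]
  have hy := (W.m_pos y).ne'
  field_simp

lemma aux_innerL (x : P) (f H : P → ℝ) :
    W.m x * W.innerL x 0 f H = ∑ y, W.m y * W.p y x * f y * H y := by
  have hx := (W.m_pos x).ne'
  have : W.linkLvl x 0 = univ.filter (fun y => x ⋖ y) := by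
    ext y
    simp [linkLvl, W.aux_cov]
  rw [innerL, this, Finset.sum_filter, Finset.mul_sum]
  apply Finset.sum_congr rfl
  intro y _
  split_ifs with h
  · rw [mL, W.aux_ch1 h]; field_simp
  · simp [W.aux_p_zero h]

lemma aux_sum_lower {y : P} (hy : 0 ≤ W.rk y) : ∑ x, W.p y x = 1 := by
  rw [← W.p_sum y hy, Finset.sum_filter]
  apply Finset.sum_congr rfl
  intro z _
  split_ifs with hz
  · rfl
  · simp [W.aux_p_zero hz]

end WGP

/-- the two-parameter decomposition identity under Property UL. -/
theorem stmt6 {P : Type} [Fintype P] [PartialOrder P] (W : WGP P)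
    (cxyz cdia csqr : ℤ → ℝ)
    (h1 : W.UL1 cxyz) (h2 : W.UL2 cdia) (h3 : W.UL3 csqr)
    (hdia : ∀ l : ℤ, 0 ≤ l → l ≤ W.d - 1 → 0 < cdia l)
    (α β : ℝ) (l : ℤ) (hl0 : 0 ≤ l) (hld : l ≤ W.d - 1) (f g : P → ℝ) :
    cdia l * W.innerAt (l + 1) (W.Up f) (W.Up g)
      = β * (1 - α) * W.innerAt (l - 1) (W.Down f) (W.Down g)
        + (α - csqr l * (cxyz l - cdia l)) * W.innerAt l f g
        + ∑ x ∈ W.lvl (l - 1), W.m x *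
            W.innerL x 0 f (fun y =>
              W.MplusL x (fun w => g w - β * W.MminusL x g w) y
                - α * (g y - β * W.MminusL x g y)) := by
  have hlvl : ∀ (i : ℤ) (x : P), x ∈ W.lvl i ↔ W.rk x = i := by
    intro i x; simp [WGP.lvl]
  -- the sum splits
  have hA : ∀ x ∈ W.lvl (l - 1), W.m x *
            W.innerL x 0 f (fun y =>
              W.MplusL x (fun w => g w - β * W.MminusL x g w) y
                - α * (g y - β * W.MminusL x g y))
      = ∑ y, W.m y * W.p y x * f y * W.MplusL x g y
        - α * ∑ y, W.m y * W.p y x * f y * g y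
        - β * (1 - α) * (W.m x * W.Down f x * W.Down g x) := by
    intro x hx
    rw [hlvl] at hx
    rw [W.aux_innerL]
    have hD : W.m x * W.Down f x * W.Down g x = ∑ y, W.m y * W.p y x * f y * W.Down g x := by
      rw [← Finset.sum_mul]
      congr 1
      unfold WGP.Down Matrix.mulVec dotProduct
      rw [Finset.mul_sum]
      apply Finset.sum_congr rfl
      intro y _
      have := (W.m_pos x).ne'
      simp only [WGP.downMat, Matrix.of_apply]
      field_simp
    rw [hD, Finset.mul_sum, Finset.mul_sum, ← Finset.sum_sub_distrib, ← Finset.sum_sub_distrib]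
    apply Finset.sum_congr rfl
    intro y _
    by_cases hxy : x ⋖ y
    · have hr := W.rk_covBy _ _ hxy
      rw [W.aux_plus_shift hxy (by omega) g _ (β * W.Down g x)
        (fun w hw => by rw [W.aux_minus hw]), W.aux_minus hxy]
      ring
    · simp [W.aux_p_zero hxy]
  rw [Finset.sum_congr rfl hA, Finset.sum_sub_distrib, Finset.sum_sub_distrib,
    ← Finset.mul_sum, ← Finset.mul_sum]
  -- swap of a double sum
  have hswap : ∀ (i j : ℤ), i + 1 = j → ∀ F : P → P → ℝ, (∀ x y, ¬ x ⋖ y → F x y = 0) →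
      ∑ x ∈ W.lvl i, ∑ y, F x y = ∑ y ∈ W.lvl j, ∑ x, F x y := by
    intro i j hij F hF
    rw [WGP.lvl, WGP.lvl, Finset.sum_filter, Finset.sum_filter]
    have e1 : ∀ x, (if W.rk x = i then ∑ y, F x y else 0)
        = ∑ y, if W.rk y = j then F x y else 0 := by
      intro x
      have : ∀ y, (if W.rk y = j then F x y else 0) = if W.rk x = i then F x y else 0 := by
        intro y
        by_cases hxy : x ⋖ y
        · have := W.rk_covBy _ _ hxy
          have e : W.rk y = j ↔ W.rk x = i := by omega
          simp only [e]
        · simp [hF x y hxy]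
      rw [Finset.sum_congr rfl (fun y _ => this y)]
      split_ifs <;> simp
    rw [Finset.sum_congr rfl (fun x _ => e1 x), Finset.sum_comm]
    apply Finset.sum_congr rfl
    intro y _
    split_ifs <;> simp
  have hT1 : ∑ x ∈ W.lvl (l - 1), ∑ y, W.m y * W.p y x * f y * g y = W.innerAt l f g := by
    rw [hswap (l - 1) l (by ring) (fun x y => W.m y * W.p y x * f y * g y)
      (fun x y h => by simp [W.aux_p_zero h])]
    apply Finset.sum_congr rfl
    intro y hy
    rw [hlvl] at hy
    have := W.aux_sum_lower (y := y) (by omega)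
    calc ∑ x, W.m y * W.p y x * f y * g y = ∑ x, W.p y x * (W.m y * f y * g y) :=
          Finset.sum_congr rfl (fun x _ => by ring)
      _ = W.m y * f y * g y := by rw [← Finset.sum_mul, this, one_mul]
  have hUU : ∑ y ∈ W.lvl l, ∑ z, W.m z * W.p z y * f y * W.Up g z
      = W.innerAt (l + 1) (W.Up f) (W.Up g) := by
    rw [hswap l (l + 1) rfl (fun y z => W.m z * W.p z y * f y * W.Up g z)
      (fun x y h => by simp [W.aux_p_zero h])]
    apply Finset.sum_congr rfl
    intro z _
    rw [← Finset.sum_mul]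
    congr 1
    unfold WGP.Up Matrix.mulVec dotProduct
    rw [Finset.mul_sum]
    apply Finset.sum_congr rfl
    intro y _
    simp only [WGP.upMat, Matrix.of_apply]
    ring
  have hK : ∀ y w z, W.rk y = l → y ⋖ z → w ⋖ z →
      ∑ x, W.p y x * W.p w x / W.chSum x z = cdia l + if w = y then cxyz l - cdia l else 0 := by
    intro y w z hy hyz hwz
    split_ifs with hwy
    · subst hwy
      rw [add_sub_cancel, ← h1 l hl0 (by omega) w hy z hyz, Finset.sum_filter]
      apply Finset.sum_congr rfl
      intro x _
      split_ifs with hx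
      · ring
      · simp [W.aux_p_zero hx]
    · have r1 := W.rk_covBy _ _ hyz
      have r2 := W.rk_covBy _ _ hwz
      rw [add_zero, ← h2 l hl0 (by omega) y w hy (by omega) (Ne.symm hwy) z hyz hwz,
        Finset.sum_filter]
      apply Finset.sum_congr rfl
      intro x _
      split_ifs with hx
      · rfl
      · by_cases hx1 : x ⋖ y
        · have : ¬ x ⋖ w := fun h => hx ⟨hx1, h⟩
          simp [W.aux_p_zero this]
        · simp [W.aux_p_zero hx1]
  have hT2 : ∑ x ∈ W.lvl (l - 1), ∑ y, W.m y * W.p y x * f y * W.MplusL x g y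
      = cdia l * W.innerAt (l + 1) (W.Up f) (W.Up g)
        + csqr l * (cxyz l - cdia l) * W.innerAt l f g := by
    rw [hswap (l - 1) l (by ring) (fun x y => W.m y * W.p y x * f y * W.MplusL x g y)
      (fun x y h => by simp [W.aux_p_zero h]), ← hUU, WGP.innerAt, Finset.mul_sum,
      Finset.mul_sum, ← Finset.sum_add_distrib]
    apply Finset.sum_congr rfl
    intro y hy
    rw [hlvl] at hy
    have hmy := (W.m_pos y).ne'
    have s1 : ∀ x, W.m y * W.p y x * f y * W.MplusL x g y
        = ∑ z, ∑ w, W.m z * W.p z y * f y * (W.p z w * g w)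
            * (W.p y x * W.p w x / W.chSum x z) := by
      intro x
      by_cases hxy : x ⋖ y
      · rw [W.aux_plus hxy, Finset.mul_sum]
        apply Finset.sum_congr rfl
        intro z _
        rw [Finset.mul_sum, Finset.mul_sum]
        apply Finset.sum_congr rfl
        intro w _
        field_simp
      · simp [W.aux_p_zero hxy]
    rw [Finset.sum_congr rfl (fun x _ => s1 x), Finset.sum_comm]
    have h3' : ∑ z, W.m z * W.p z y ^ 2 = csqr l * W.m y := by
      rw [← h3 l hl0 (by omega) y hy, Finset.sum_filter]
      apply Finset.sum_congr rfl
      intro x _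
      split_ifs with hx
      · rfl
      · simp [W.aux_p_zero hx]
    have s2 : ∀ z, ∑ x, ∑ w, W.m z * W.p z y * f y * (W.p z w * g w)
            * (W.p y x * W.p w x / W.chSum x z)
        = cdia l * (W.m z * W.p z y * f y * W.Up g z)
          + (W.m z * W.p z y ^ 2) * ((cxyz l - cdia l) * f y * g y) := by
      intro z
      rw [Finset.sum_comm]
      have s3 : ∀ w, ∑ x, W.m z * W.p z y * f y * (W.p z w * g w)
            * (W.p y x * W.p w x / W.chSum x z)
          = (cdia l * (W.m z * W.p z y * f y)) * (W.p z w * g w)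
            + if w = y then W.m z * W.p z y * f y * (W.p z w * g w) * (cxyz l - cdia l)
              else 0 := by
        intro w
        rw [← Finset.mul_sum]
        by_cases hyz : y ⋖ z
        · by_cases hwz : w ⋖ z
          · rw [hK y w z hy hyz hwz]
            split_ifs <;> ring
          · simp [W.aux_p_zero hwz]
        · simp [W.aux_p_zero hyz]
      rw [Finset.sum_congr rfl (fun w _ => s3 w), Finset.sum_add_distrib, ← Finset.mul_sum,
        Finset.sum_ite_eq' univ y, if_pos (mem_univ y)]
      have : W.Up g z = ∑ w, W.p z w * g w := by
        simp [WGP.Up, Matrix.mulVec, dotProduct, WGP.upMat]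
      rw [this]
      ring
    rw [Finset.sum_congr rfl (fun z _ => s2 z), Finset.sum_add_distrib, ← Finset.mul_sum,
      ← Finset.sum_mul, h3']
    ring
  rw [hT1, hT2]
  have hDD : ∑ x ∈ W.lvl (l - 1), W.m x * W.Down f x * W.Down g x
      = W.innerAt (l - 1) (W.Down f) (W.Down g) := rfl
  rw [hDD]
  ring
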